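/- arXiv:1911.04004 — 5 statements merged into one kernel-verified Lean document; each statement's English description precedes it below -/
import Mathlib

section
/- In a repeated purely adversarial Stackelberg game, the Stackelberg regret is upper bounded by the external regret. Precisely: let 𝒜 be a nonempty finite action set, 𝒳 a response space, ℓ : 𝒜 × 𝒳 → ℝ a loss function, and for each round t ∈ {1,…,T} let r_t : 𝒜 → 𝒳 be the agent's response function. Assume the game is purely adversarial: for all t and all α, α' ∈ 𝒜, ℓ(α, r_t(α)) ≥ ℓ(α, r_t(α')). Then for every sequence of actions α_1,…,α_T ∈ 𝒜, the Stackelberg regret ∑_{t=1}^T ℓ(α_t, r_t(α_t)) − min_{α ∈ 𝒜} ∑_{t=1}^T ℓ(α, r_t(α)) is at most the external regret ∑_{t=1}^T ℓ(α_t, r_t(α_t)) − min_{α ∈ 𝒜} ∑_{t=1}^T ℓ(α, r_t(α_t)); equivalently, min_{α ∈ 𝒜} ∑_{t=1}^T ℓ(α, r_t(α_t)) ≤ min_{α ∈ 𝒜} ∑_{t=1}^T ℓ(α, r_t(α)). -/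
/-- In a repeated purely adversarial Stackelberg game (the agent's best response to the
committed action inflicts the highest loss), the Stackelberg regret is upper bounded by
the external regret. -/
theorem pasg_stackelberg_regret_le_external_regret
    {A X : Type*} [Fintype A] [Nonempty A]
    (T : ℕ) (ℓ : A → X → ℝ) (r : Fin T → A → X)
    (hPASG : ∀ (t : Fin T) (α α' : A), ℓ α (r t α) ≥ ℓ α (r t α'))
    (a : Fin T → A) :
    (∑ t, ℓ (a t) (r t (a t))) -
      (Finset.univ.inf' Finset.univ_nonempty fun α : A => ∑ t, ℓ α (r t α)) ≤
    (∑ t, ℓ (a t) (r t (a t))) -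
      (Finset.univ.inf' Finset.univ_nonempty fun α : A => ∑ t, ℓ α (r t (a t))) := by
  refine sub_le_sub_left ?_ _
  refine Finset.le_inf' _ _ fun α hα => ?_
  refine (Finset.inf'_le (fun α : A => ∑ t, ℓ α (r t (a t))) hα).trans ?_
  exact Finset.sum_le_sum fun t _ => hPASG t α (a t)
end

section
/- In a repeated purely cooperative Stackelberg game, the external regret is upper bounded by the Stackelberg regret. Precisely: let 𝒜 be a nonempty finite action set, 𝒳 a response space, ℓ : 𝒜 × 𝒳 → ℝ a loss function, and for each round t ∈ {1,…,T} let r_t : 𝒜 → 𝒳 be the agent's response function. Assume the game is purely cooperative: for all t and all α, α' ∈ 𝒜, ℓ(α, r_t(α)) ≤ ℓ(α, r_t(α')). Then for every sequence of actions α_1,…,α_T ∈ 𝒜, the external regret ∑_{t=1}^T ℓ(α_t, r_t(α_t)) − min_{α ∈ 𝒜} ∑_{t=1}^T ℓ(α, r_t(α_t)) is at most the Stackelberg regret ∑_{t=1}^T ℓ(α_t, r_t(α_t)) − min_{α ∈ 𝒜} ∑_{t=1}^T ℓ(α, r_t(α)). -/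
/-- In a repeated purely cooperative Stackelberg game (the agent's best response to the
committed action inflicts the lowest loss), the external regret is upper bounded by
the Stackelberg regret. -/
theorem pcsg_external_regret_le_stackelberg_regret
    {A X : Type*} [Fintype A] [Nonempty A]
    (T : ℕ) (ℓ : A → X → ℝ) (r : Fin T → A → X)
    (hPCSG : ∀ (t : Fin T) (α α' : A), ℓ α (r t α) ≤ ℓ α (r t α'))
    (a : Fin T → A) :
    (∑ t, ℓ (a t) (r t (a t))) -
      (Finset.univ.inf' Finset.univ_nonempty fun α : A => ∑ t, ℓ α (r t (a t))) ≤
    (∑ t, ℓ (a t) (r t (a t))) -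
      (Finset.univ.inf' Finset.univ_nonempty fun α : A => ∑ t, ℓ α (r t α)) := by
  apply sub_le_sub_left
  apply Finset.le_inf'
  intro α hα
  exact (Finset.inf'_le (fun α : A => ∑ t, ℓ α (r t α)) hα).trans
    (Finset.sum_le_sum fun t _ => hPCSG t α (a t))
end

section
/- Exact regret identities in the incompatibility instance: define the expected-loss matrix L : {h, h'} × {h, h'} → ℝ by L(h, h) = 1/5, L(h, h') = 9/10, L(h', h) = 1/20, L(h', h') = 1/4, where L(a, b) is the learner's expected loss when playing classifier a against agent responses tailored to classifier b. Fix a horizon T ≥ 1 and a sequence a_1, …, a_T ∈ {h, h'}, and let n = |{t : a_t = h'}|. Then: (i) min_{c ∈ {h,h'}} ∑_{t=1}^T L(c, a_t) = (1/20)·(T − n) + (1/4)·n, so the external regret equals R(T) = ∑_{t=1}^T L(a_t, a_t) − min_c ∑_t L(c, a_t) = (3/20)·(T − n); (ii) min_{c ∈ {h,h'}} T·L(c, c) = T/5, so the Stackelberg regret equals 𝓡(T) = ∑_{t=1}^T L(a_t, a_t) − T/5 = (1/20)·n; and consequently (iii) R(T) + 3·𝓡(T) = (3/20)·T. -/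
/-- Exact regret identities in the incompatibility instance of Theorem 3.1.
The two actions `h, h'` are encoded as `false, true : Bool`; `L a b` is the learner's
expected loss when playing classifier `a` against agent responses tailored to `b`.
With `n` the number of rounds in which `h'` is played:
(i) the best fixed comparator against the realized responses has loss
`(1/20)(T−n) + (1/4)n`, so the external regret equals `(3/20)(T−n)`;
(ii) the best fixed Stackelberg comparator has loss `T/5`, so the Stackelberg regret
equals `(1/20)n`; and consequently (iii) `R(T) + 3·𝓡(T) = (3/20)T`. -/
theorem incompatibility_instance_regret_identities
    (L : Bool → Bool → ℝ)
    (hhh : L false false = 1 / 5) (hhh' : L false true = 9 / 10)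
    (hh'h : L true false = 1 / 20) (hh'h' : L true true = 1 / 4)
    (T : ℕ) (hT : 1 ≤ T) (a : Fin T → Bool)
    (n : ℕ) (hn : n = (Finset.univ.filter fun t => a t = true).card) :
    (min (∑ t, L false (a t)) (∑ t, L true (a t))
        = (1 / 20) * ((T : ℝ) - n) + (1 / 4) * n
      ∧ (∑ t, L (a t) (a t)) - min (∑ t, L false (a t)) (∑ t, L true (a t))
        = (3 / 20) * ((T : ℝ) - n))
    ∧ (min ((T : ℝ) * L false false) ((T : ℝ) * L true true) = (T : ℝ) / 5
      ∧ (∑ t, L (a t) (a t)) - (T : ℝ) / 5 = (1 / 20) * n)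
    ∧ ((∑ t, L (a t) (a t)) - min (∑ t, L false (a t)) (∑ t, L true (a t)))
        + 3 * ((∑ t, L (a t) (a t)) - (T : ℝ) / 5) = (3 / 20) * T := by
  have key : ∀ f : Bool → ℝ, ∑ t, f (a t) = f false * ((T : ℝ) - n) + f true * n := by
    intro f
    have h1 : ∀ t, f (a t) = f false + (f true - f false) * (if a t = true then 1 else 0) := by
      intro t
      cases a t <;> simp
    have h2 : (n : ℝ) = ∑ t, (if a t = true then (1 : ℝ) else 0) := by
      rw [hn, Finset.sum_boole]
    rw [Finset.sum_congr rfl (fun t _ => h1 t), Finset.sum_add_distrib, ← Finset.mul_sum, ← h2]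
    simp
    ring
  have hle : (n : ℝ) ≤ T := by
    have : n ≤ T := by
      rw [hn]
      exact (Finset.card_le_univ _).trans (by simp)
    exact_mod_cast this
  have hn0 : (0 : ℝ) ≤ n := Nat.cast_nonneg n
  have k1 := key (fun b => L false b)
  have k2 := key (fun b => L true b)
  have k3 := key (fun b => L b b)
  simp only [hhh, hhh', hh'h, hh'h'] at k1 k2 k3
  have hm : min (∑ t, L false (a t)) (∑ t, L true (a t)) = ∑ t, L true (a t) := by
    apply min_eq_right
    rw [k1, k2]
    linarith
  have hm2 : min ((T : ℝ) * L false false) ((T : ℝ) * L true true) = (T : ℝ) / 5 := by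
    rw [hhh, hh'h', min_eq_left (by linarith)]
    ring
  rw [hm, hm2, k2, k3]
  refine ⟨⟨?_, ?_⟩, ⟨rfl, ?_⟩, ?_⟩ <;> ring
end

section
/- Strong incompatibility of external and Stackelberg regret: with the expected-loss matrix L : {h, h'} × {h, h'} → ℝ given by L(h, h) = 1/5, L(h, h') = 9/10, L(h', h) = 1/20, L(h', h') = 1/4, for every horizon T ≥ 1 and every action sequence a_1, …, a_T ∈ {h, h'}, the maximum of the external regret R(T) = ∑_{t=1}^T L(a_t, a_t) − min_{c} ∑_{t=1}^T L(c, a_t) and the Stackelberg regret 𝓡(T) = ∑_{t=1}^T L(a_t, a_t) − min_c T·L(c, c) satisfies max(R(T), 𝓡(T)) ≥ (3/80)·T. In particular, no action sequence can make both regrets sublinear in T. -/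
/-- Strong incompatibility of external and Stackelberg regret: in the expected-loss
instance of Theorem 3.1 (actions `h, h'` encoded as `false, true : Bool`), for every
horizon `T ≥ 1` and every action sequence, the maximum of the external regret and the
Stackelberg regret is at least `(3/80)·T`; in particular no action sequence can make
both regrets sublinear in `T`. -/
theorem strong_incompatibility_external_stackelberg
    (L : Bool → Bool → ℝ)
    (hhh : L false false = 1 / 5) (hhh' : L false true = 9 / 10)
    (hh'h : L true false = 1 / 20) (hh'h' : L true true = 1 / 4)
    (T : ℕ) (hT : 1 ≤ T) (a : Fin T → Bool) :
    max ((∑ t, L (a t) (a t)) - min (∑ t, L false (a t)) (∑ t, L true (a t)))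
        ((∑ t, L (a t) (a t)) - min ((T : ℝ) * L false false) ((T : ℝ) * L true true))
      ≥ (3 / 80) * T := by
  have key : (∑ t, L (a t) (a t)) = (1 / 4) * (∑ t, L true (a t)) + (3 / 16) * T := by
    have h1 : ∀ t, L (a t) (a t) = (1 / 4) * L true (a t) + 3 / 16 := by
      intro t
      cases a t
      · rw [hhh, hh'h]; norm_num
      · rw [hh'h']; norm_num
    rw [Finset.sum_congr rfl (fun t _ => h1 t), Finset.sum_add_distrib, ← Finset.mul_sum]
    simp
    ring
  have m1 := min_le_right (∑ t, L false (a t)) (∑ t, L true (a t))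
  have m2 := min_le_left ((T : ℝ) * L false false) ((T : ℝ) * L true true)
  have hs : (T : ℝ) * L false false = T / 5 := by rw [hhh]; ring
  by_contra hc
  have hc := not_le.mp hc
  obtain ⟨c1, c2⟩ := max_lt_iff.mp hc
  linarith
end

section
/- Second-order regret bound for continuous exponential weights: let (𝒜, Σ, λ) be a measure space with 0 < λ(𝒜) < ∞, let η > 0, and let ℓ_1, …, ℓ_T : 𝒜 → [0, ∞) be measurable with ∫_𝒜 ℓ_t² dλ < ∞ for each t. Define weights w_t(α) = exp(−η · ∑_{τ=1}^{t−1} ℓ_τ(α)), normalizations W_t = ∫_𝒜 w_t dλ, and densities q_t = w_t / W_t. Suppose P ⊆ 𝒜 is measurable with λ(P) > 0 and α* ∈ P is such that ℓ_t(α) = ℓ_t(α*) for all α ∈ P and all t ∈ {1,…,T}. Then ∑_{t=1}^T ∫_𝒜 q_t(α) ℓ_t(α) dλ(α) − ∑_{t=1}^T ℓ_t(α*) ≤ (η/2) · ∑_{t=1}^T ∫_𝒜 q_t(α) ℓ_t(α)² dλ(α) + (1/η) · log(λ(𝒜) / λ(P)). -/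
open MeasureTheory

lemma aux_exp_neg_le {x : ℝ} (hx : 0 ≤ x) : Real.exp (-x) ≤ 1 - x + x ^ 2 / 2 := by
  have h := Real.quadratic_le_exp_of_nonneg hx
  have hp : 0 < Real.exp x := Real.exp_pos x
  rw [Real.exp_neg, inv_le_iff_one_le_mul₀ hp]
  have h2 : 0 ≤ 1 - x + x ^ 2 / 2 := by nlinarith [sq_nonneg (x - 1)]
  have h3 := mul_le_mul_of_nonneg_left h h2
  nlinarith [sq_nonneg (x ^ 2)]

/-- Second-order regret bound for continuous exponential weights: with exponential
weights `w t α = exp(−η ∑_{τ<t} ℓ τ α)` over a base measure `μ` of positive finite total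
mass, normalizations `W t = ∫ w t dμ` and densities `q t = w t / W t`, and a comparator
`α* ∈ P` lying in a measurable set of positive measure on which every loss is constant,
the cumulative expected loss exceeds the comparator's cumulative loss by at most
`(η/2)·∑_t ∫ q_t ℓ_t² dμ + (1/η)·log(μ(𝒜)/μ(P))`. -/
theorem continuous_exponential_weights_second_order_regret
    {𝒜 : Type*} [MeasurableSpace 𝒜] (μ : Measure 𝒜)
    (h0 : 0 < μ Set.univ) (hfin : μ Set.univ < ⊤)
    (η : ℝ) (hη : 0 < η) (T : ℕ)
    (ℓ : ℕ → 𝒜 → ℝ)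
    (hmeas : ∀ t, Measurable (ℓ t))
    (hnn : ∀ t α, 0 ≤ ℓ t α)
    (hint : ∀ t, Integrable (fun α => (ℓ t α) ^ 2) μ)
    (w : ℕ → 𝒜 → ℝ)
    (hw : ∀ t α, w t α = Real.exp (-η * ∑ τ ∈ Finset.range t, ℓ τ α))
    (W : ℕ → ℝ) (hW : ∀ t, W t = ∫ α, w t α ∂μ)
    (q : ℕ → 𝒜 → ℝ) (hq : ∀ t α, q t α = w t α / W t)
    (P : Set 𝒜) (hP : MeasurableSet P) (hPpos : 0 < μ P)
    (αs : 𝒜) (hαs : αs ∈ P)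
    (hconst : ∀ α ∈ P, ∀ t < T, ℓ t α = ℓ t αs) :
    (∑ t ∈ Finset.range T, ∫ α, q t α * ℓ t α ∂μ) - ∑ t ∈ Finset.range T, ℓ t αs ≤
      (η / 2) * ∑ t ∈ Finset.range T, ∫ α, q t α * (ℓ t α) ^ 2 ∂μ +
        (1 / η) * Real.log ((μ Set.univ).toReal / (μ P).toReal) := by
  have : IsFiniteMeasure μ := ⟨hfin⟩
  have hwpos : ∀ t α, 0 < w t α := fun t α => by rw [hw]; exact Real.exp_pos _
  have hwle : ∀ t α, w t α ≤ 1 := fun t α => by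
    rw [hw, Real.exp_le_one_iff]
    have : 0 ≤ ∑ τ ∈ Finset.range t, ℓ τ α := Finset.sum_nonneg fun τ _ => hnn τ α
    nlinarith
  have hwm : ∀ t, Measurable (w t) := fun t => by
    have : w t = fun α => Real.exp (-η * ∑ τ ∈ Finset.range t, ℓ τ α) := funext (hw t)
    rw [this]
    fun_prop
  have hwb : ∀ t, ∀ᵐ α ∂μ, ‖w t α‖ ≤ 1 := fun t => Filter.Eventually.of_forall fun α => by
    rw [Real.norm_of_nonneg (hwpos t α).le]; exact hwle t α
  have hwi : ∀ t, Integrable (w t) μ := fun t =>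
    Integrable.of_bound (hwm t).aestronglyMeasurable 1 (hwb t)
  have hli : ∀ t, Integrable (ℓ t) μ := fun t =>
    ((memLp_two_iff_integrable_sq (hmeas t).aestronglyMeasurable).2 (hint t)).integrable
      (by norm_num)
  have hwl : ∀ t, Integrable (fun α => w t α * ℓ t α) μ := fun t =>
    (hli t).bdd_mul (hwm t).aestronglyMeasurable (hwb t)
  have hwl2 : ∀ t, Integrable (fun α => w t α * (ℓ t α) ^ 2) μ := fun t =>
    (hint t).bdd_mul (hwm t).aestronglyMeasurable (hwb t)
  have hμ : μ ≠ 0 := fun h => by simp [h] at h0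
  have hWpos : ∀ t, 0 < W t := fun t => by
    rw [hW, integral_pos_iff_support_of_nonneg (fun α => (hwpos t α).le) (hwi t)]
    have : Function.support (w t) = Set.univ := by
      ext α; simp [(hwpos t α).ne']
    rwa [this]
  have hA : ∀ t, ∫ α, q t α * ℓ t α ∂μ = (∫ α, w t α * ℓ t α ∂μ) / W t := fun t => by
    rw [← integral_div]; congr 1; ext α; rw [hq]; ring
  have hB : ∀ t, ∫ α, q t α * (ℓ t α) ^ 2 ∂μ = (∫ α, w t α * (ℓ t α) ^ 2 ∂μ) / W t := fun t => by
    rw [← integral_div]; congr 1; ext α; rw [hq]; ring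
  have step : ∀ t, W (t + 1) ≤ W t - η * (∫ α, w t α * ℓ t α ∂μ)
      + η ^ 2 / 2 * ∫ α, w t α * (ℓ t α) ^ 2 ∂μ := fun t => by
    have hs : Integrable (fun α => w t α - η * (w t α * ℓ t α)) μ :=
      (hwi t).sub ((hwl t).const_mul η)
    rw [hW (t + 1), hW t, ← integral_const_mul, ← integral_const_mul,
      ← integral_sub (hwi t) ((hwl t).const_mul η),
      ← integral_add hs ((hwl2 t).const_mul _)]
    refine integral_mono (hwi _)
      (hs.add ((hwl2 t).const_mul _)) fun α => ?_
    have e : w (t + 1) α = w t α * Real.exp (-(η * ℓ t α)) := by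
      rw [hw, hw, ← Real.exp_add, Finset.sum_range_succ]; congr 1; ring
    have h := mul_le_mul_of_nonneg_left
      (aux_exp_neg_le (mul_nonneg hη.le (hnn t α))) (hwpos t α).le
    show w (t + 1) α ≤ w t α - η * (w t α * ℓ t α) + η ^ 2 / 2 * (w t α * (ℓ t α) ^ 2)
    rw [e]
    linarith
  have step2 : ∀ t, Real.log (W (t + 1)) - Real.log (W t) ≤
      -η * (∫ α, q t α * ℓ t α ∂μ) + η ^ 2 / 2 * ∫ α, q t α * (ℓ t α) ^ 2 ∂μ := fun t => by
    rw [← Real.log_div (hWpos _).ne' (hWpos _).ne', hA, hB]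
    refine (Real.log_le_sub_one_of_pos (div_pos (hWpos _) (hWpos _))).trans ?_
    have h := div_le_div_of_nonneg_right (step t) (hWpos t).le
    rw [add_div, sub_div, div_self (hWpos t).ne', mul_div_assoc, mul_div_assoc] at h
    linarith
  have tele := Finset.sum_le_sum fun t (_ : t ∈ Finset.range T) => step2 t
  rw [Finset.sum_range_sub (fun t => Real.log (W t)), Finset.sum_add_distrib,
    ← Finset.mul_sum, ← Finset.mul_sum] at tele
  have hW0 : W 0 = (μ Set.univ).toReal := by
    rw [hW]; simp [hw, Measure.real]
  have hPr : 0 < (μ P).toReal := ENNReal.toReal_pos hPpos.ne' (measure_ne_top _ _)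
  have hWT : Real.exp (-η * ∑ t ∈ Finset.range T, ℓ t αs) * (μ P).toReal ≤ W T := by
    have h1 : ∫ α in P, w T α ∂μ ≤ W T := by
      rw [hW]
      exact setIntegral_le_integral (hwi T) (Filter.Eventually.of_forall fun α => (hwpos T α).le)
    have h2 : ∫ α in P, w T α ∂μ
        = ∫ α in P, Real.exp (-η * ∑ t ∈ Finset.range T, ℓ t αs) ∂μ := by
      refine setIntegral_congr_fun hP fun α hα => ?_
      simp only [hw]
      rw [Finset.sum_congr rfl fun t ht => hconst α hα t (Finset.mem_range.1 ht)]
    rw [h2, setIntegral_const, smul_eq_mul, Measure.real] at h1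
    linarith
  have hlog := Real.log_le_log (mul_pos (Real.exp_pos _) hPr) hWT
  rw [Real.log_mul (Real.exp_pos _).ne' hPr.ne', Real.log_exp] at hlog
  rw [Real.log_div (by rw [← hW0]; exact (hWpos 0).ne') hPr.ne', ← hW0]
  refine le_of_mul_le_mul_left ?_ hη
  have e : ∀ B X : ℝ, η * (η / 2 * B + 1 / η * X) = η ^ 2 / 2 * B + X := fun B X => by
    field_simp
  rw [e]
  linarith
end
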